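/- For every real number x, the limit as n → ∞ of P_n({λ ∈ D_n : Σ_{k=1}^{k_n} 2·X_k(λ)/k − log(k_n) − γ ≤ x}) equals P(H ≤ x), where P(H ≤ x) = μ({ω : the partial sums H_m(ω) converge to a limit that is ≤ x}). -/

import Mathlib

/-!
Write `m = kn n`, `M = 1 + ⋯ + m`, and let `q(N)` be the number of partitions of `N` into distinct
parts `> m` (`bigSets m N`). A distinct parts partition of `n` is a subset `T` of `{1, …, m}` (its
small parts) together with a partition of `n - ∑ T` into distinct parts `> m`. Hence the law of the
small parts gives `T` a weight proportional to `q(n - ∑ T)`, where `0 ≤ ∑ T ≤ M`. Since `q` is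
monotone (enlarge the largest part), all these weights lie between `q(n - M)` and `q(n)`, so
`Pn_bounds` compares `Pn` with the uniform measure on subsets of `{1, …, m}`, i.e. with fair coins,
up to the factor `shrink n = q(n - M) / q(n)`. The analytic heart is `tendsto_shrink`: this factor
tends to `1`.

The estimate of `shrink n` is elementary. Join a partition of `N + 1` to the partitions of `N`
obtained by decreasing one part by one. The degrees on both sides essentially count maximal runs of
consecutive parts, and along an edge the lower degree exceeds the upper one by at most two.
Double counting gives `q(N + 1) ≤ (1 + 2 / K) q(N)` up to the partitions with fewer than `K`
decreasable parts (`card_many_downs_le`), and there are at most `(N + 3) ^ (2 K)` of those, because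
a set is determined by the ends of its runs (`card_few_downs_le`). With `K = m² (⌊log₂ m⌋ + 1)`,
iterating `M ≤ m²` times costs a factor `exp (2 / (⌊log₂ m⌋ + 1))`, and the exceptional partitions
are negligible against the lower bound `q(n) ≥ 2 ^ (m² ⌊√m⌋ - m)` (`two_pow_le_card_bigSets`), which
uses `m ^ 5 ≤ n`.

Under the coin measure, `∑ 2 X_k / k - log m - γ` is `H_m` plus a deterministic shift tending to `0`.
The sums `H_m` form an `L²`-bounded martingale, so they converge almost surely
(`ae_tendsto_Hpart`), and the limit has no atoms, because flipping coin `k` moves the value `x` to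
`x ± 2 / k` (`measure_Hpart_tendsto_eq_zero`). Together these give convergence of
`μ (H_m + shift ≤ x)` to `μ (H ≤ x)` at every `x`.
-/

open scoped BigOperators ENNReal
open MeasureTheory Filter

/-- The uniform probability (as a real number) that a distinct parts partition of `n`
satisfies the predicate `p`. -/
noncomputable def Pn (n : ℕ) (p : Nat.Partition n → Prop) : ℝ :=
  letI := Classical.decPred p
  (((Nat.Partition.distincts n).filter p).card : ℝ) / ((Nat.Partition.distincts n).card : ℝ)

/-- `X k lam` is the multiplicity of the part `k` in the partition `lam`. -/
def X {n : ℕ} (lam : Nat.Partition n) (k : ℕ) : ℕ := Multiset.count k lam.parts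

/-- `kn n = ⌊n^(1/5)⌋`. -/
noncomputable def kn (n : ℕ) : ℕ := ⌊(n : ℝ) ^ ((1 : ℝ) / 5)⌋₊

/-- Partial sums of the random harmonic series: `H_m(ω) = Σ_{k=1}^m ε_k(ω)/k`,
where `ε_k(ω) = 1` if `ω k = true` and `−1` otherwise. -/
noncomputable def Hpart (ω : ℕ → Bool) (m : ℕ) : ℝ :=
  ∑ k ∈ Finset.Icc 1 m, (if ω k then (1 : ℝ) else -1) / k

/-! ### The random harmonic series -/

/-- The involution of `ℕ → Bool` that flips the `k`-th coin. -/
def flipAt (k : ℕ) (ω : ℕ → Bool) : ℕ → Bool := Function.update ω k (!ω k)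

lemma measurable_flipAt (k : ℕ) : Measurable (flipAt k) := by
  refine measurable_pi_iff.2 fun j => ?_
  by_cases h : j = k
  · subst h
    have : (fun ω : ℕ → Bool => flipAt j ω j) = (fun b : Bool => !b) ∘ fun ω => ω j := by
      funext ω; simp [flipAt]
    rw [this]
    exact (measurable_of_countable _).comp (measurable_pi_apply j)
  · have : (fun ω : ℕ → Bool => flipAt k ω j) = fun ω => ω j := by
      funext ω; simp [flipAt, h]
    rw [this]
    exact measurable_pi_apply j

/-- The cylinder probabilities determine `μ` through its finite-dimensional marginals, and the
flipped measure has the same cylinder probabilities. -/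
lemma measurePreserving_flipAt
    (μ : Measure (ℕ → Bool)) [IsProbabilityMeasure μ]
    (hμ : ∀ (s : Finset ℕ) (f : ℕ → Bool),
      μ {ω | ∀ k ∈ s, ω k = f k} = (1 / 2 : ℝ≥0∞) ^ s.card) (k : ℕ) :
    MeasurePreserving (flipAt k) μ μ := by
  refine ⟨measurable_flipAt k, ?_⟩
  have : IsProbabilityMeasure (μ.map (flipAt k)) :=
    Measure.isProbabilityMeasure_map (measurable_flipAt k).aemeasurable
  have key : IsProjectiveLimit (μ.map (flipAt k))
      (fun I : Finset ℕ => μ.map (I.restrict : (ℕ → Bool) → _)) := by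
    intro I
    rw [Measure.map_map (Finset.measurable_restrict I) (measurable_flipAt k)]
    refine Measure.ext_of_singleton fun g => ?_
    rw [Measure.map_apply ((Finset.measurable_restrict I).comp (measurable_flipAt k))
      (measurableSet_singleton g), Measure.map_apply (Finset.measurable_restrict I)
      (measurableSet_singleton g)]
    -- an extension of the pattern `g` to all of `ℕ`
    let f : ℕ → Bool := fun j => if h : j ∈ I then g ⟨j, h⟩ else true
    have h1 : (I.restrict : (ℕ → Bool) → _) ⁻¹' {g} = {ω | ∀ j ∈ I, ω j = f j} := by
      ext ω
      simp only [Set.mem_preimage, Set.mem_singleton_iff, Set.mem_ofPred_eq, funext_iff,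
        Subtype.forall, Finset.restrict]
      refine forall₂_congr fun j hj => ?_
      simp [f, hj]
    have h2 : ((I.restrict : (ℕ → Bool) → _) ∘ flipAt k) ⁻¹' {g} =
        {ω | ∀ j ∈ I, ω j = flipAt k f j} := by
      ext ω
      rw [Set.preimage_comp, h1]
      simp only [Set.mem_preimage, Set.mem_ofPred_eq]
      refine forall₂_congr fun j _ => ?_
      by_cases h : j = k
      · subst h
        simp only [flipAt, Function.update_self]
        cases ω j <;> cases f j <;> simp
      · simp [flipAt, h]
    rw [h1, h2, hμ, hμ]
  exact key.unique (fun I => rfl)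

/-- The sign `ε_k`. -/
noncomputable def sgn (ω : ℕ → Bool) (k : ℕ) : ℝ := if ω k then 1 else -1

lemma measurable_sgn (k : ℕ) : Measurable fun ω => sgn ω k := by
  have : (fun ω => sgn ω k) = (fun b : Bool => if b then (1 : ℝ) else -1) ∘ fun ω => ω k := rfl
  rw [this]
  exact (measurable_of_countable _).comp (measurable_pi_apply k)

lemma abs_sgn (ω : ℕ → Bool) (k : ℕ) : |sgn ω k| = 1 := by
  unfold sgn; split_ifs <;> simp

lemma sgn_flipAt_self (ω : ℕ → Bool) (k : ℕ) : sgn (flipAt k ω) k = - sgn ω k := by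
  unfold sgn flipAt
  cases ω k <;> simp

lemma Hpart_succ (ω : ℕ → Bool) (m : ℕ) :
    Hpart ω (m + 1) = Hpart ω m + sgn ω (m + 1) / ((m + 1 : ℕ) : ℝ) := by
  unfold Hpart
  rw [Finset.sum_Icc_succ_top (by omega)]
  rfl

lemma Hpart_congr {ω ω' : ℕ → Bool} {m : ℕ} (h : ∀ k ∈ Finset.Icc 1 m, ω k = ω' k) :
    Hpart ω m = Hpart ω' m :=
  Finset.sum_congr rfl fun k hk => by rw [h k hk]

lemma Hpart_flipAt_of_lt (ω : ℕ → Bool) {m k : ℕ} (h : m < k) :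
    Hpart (flipAt k ω) m = Hpart ω m :=
  Hpart_congr fun j hj => by
    have := (Finset.mem_Icc.1 hj).2
    simp [flipAt, show j ≠ k by omega]

lemma Hpart_flipAt_of_le (ω : ℕ → Bool) {m k : ℕ} (hk : 1 ≤ k) (h : k ≤ m) :
    Hpart (flipAt k ω) m = Hpart ω m - 2 * sgn ω k / k := by
  induction m, h using Nat.le_induction with
  | base =>
    obtain ⟨j, rfl⟩ : ∃ j, k = j + 1 := ⟨k - 1, by omega⟩
    rw [Hpart_succ, Hpart_succ, Hpart_flipAt_of_lt _ (by omega), sgn_flipAt_self]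
    ring
  | succ m hm ih =>
    have : sgn (flipAt k ω) (m + 1) = sgn ω (m + 1) := by
      simp [sgn, flipAt, show m + 1 ≠ k by omega]
    rw [Hpart_succ, Hpart_succ, ih, this]
    ring

lemma measurable_Hpart (m : ℕ) : Measurable fun ω => Hpart ω m := by
  unfold Hpart
  exact Finset.measurable_sum _ fun k _ => (measurable_sgn k).div_const _

lemma abs_Hpart_le (ω : ℕ → Bool) (m : ℕ) : |Hpart ω m| ≤ m := by
  induction m with
  | zero => simp [Hpart]
  | succ m ih =>
    rw [Hpart_succ]
    refine (abs_add_le _ _).trans ?_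
    rw [abs_div, abs_sgn, Nat.abs_cast]
    have : (1 : ℝ) / ((m + 1 : ℕ) : ℝ) ≤ 1 := by
      rw [div_le_one (by positivity)]; push_cast; linarith [Nat.cast_nonneg (α := ℝ) m]
    push_cast at this ⊢
    linarith

lemma integrable_of_abs_le (μ : Measure (ℕ → Bool)) [IsProbabilityMeasure μ]
    {g : (ℕ → Bool) → ℝ} (hg : Measurable g) (C : ℝ) (h : ∀ ω, |g ω| ≤ C) : Integrable g μ :=
  Integrable.of_bound hg.aestronglyMeasurable C (ae_of_all _ h)

/-- A function that does not depend on coin `k` is orthogonal to `ε_k`. -/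
lemma integral_mul_sgn_eq_zero {μ : Measure (ℕ → Bool)} {k : ℕ}
    (hp : MeasurePreserving (flipAt k) μ μ) {g : (ℕ → Bool) → ℝ} (hg : Measurable g)
    (hinv : ∀ ω, g (flipAt k ω) = g ω) : ∫ ω, g ω * sgn ω k ∂μ = 0 := by
  have h1 : ∫ ω, g (flipAt k ω) * sgn (flipAt k ω) k ∂μ = ∫ ω, g ω * sgn ω k ∂μ := by
    have := integral_map (μ := μ) (measurable_flipAt k).aemeasurable
      (f := fun ω => g ω * sgn ω k) (hg.mul (measurable_sgn k)).aestronglyMeasurable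
    rw [hp.map_eq] at this
    exact this.symm
  simp only [hinv, sgn_flipAt_self, mul_neg, integral_neg] at h1
  linarith

lemma integral_Hpart_sq_le (μ : Measure (ℕ → Bool)) [IsProbabilityMeasure μ]
    (hp : ∀ k, MeasurePreserving (flipAt k) μ μ) (m : ℕ) :
    ∫ ω, Hpart ω m ^ 2 ∂μ ≤ 3 - 2 / ((m : ℝ) + 1) := by
  induction m with
  | zero => norm_num [Hpart]
  | succ m ih =>
    have e : ∀ ω, Hpart ω (m + 1) ^ 2 = Hpart ω m ^ 2 +
        (2 / ((m + 1 : ℕ) : ℝ) * (Hpart ω m * sgn ω (m + 1)) + 1 / ((m + 1 : ℕ) : ℝ) ^ 2) := by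
      intro ω
      have : sgn ω (m + 1) ^ 2 = 1 := by rw [← sq_abs, abs_sgn]; norm_num
      rw [Hpart_succ, add_sq, div_pow, this]
      ring
    simp_rw [e]
    have i1 : Integrable (fun ω => Hpart ω m ^ 2) μ :=
      integrable_of_abs_le μ ((measurable_Hpart m).pow_const 2) ((m : ℝ) ^ 2) fun ω => by
        rw [abs_pow]; exact pow_le_pow_left₀ (abs_nonneg _) (abs_Hpart_le ω m) 2
    have i2 : Integrable (fun ω => Hpart ω m * sgn ω (m + 1)) μ :=
      integrable_of_abs_le μ ((measurable_Hpart m).mul (measurable_sgn _)) m fun ω => by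
        rw [abs_mul, abs_sgn, mul_one]; exact abs_Hpart_le ω m
    have i3 : Integrable (fun ω => 2 / ((m + 1 : ℕ) : ℝ) * (Hpart ω m * sgn ω (m + 1)) +
        1 / ((m + 1 : ℕ) : ℝ) ^ 2) μ := (i2.const_mul _).add (integrable_const _)
    rw [integral_add i1 i3,
      integral_add (i2.const_mul _) (integrable_const _), integral_const_mul,
      integral_mul_sgn_eq_zero (hp _) (measurable_Hpart m)
        (fun ω => Hpart_flipAt_of_lt ω (Nat.lt_succ_self m))]
    simp only [mul_zero, zero_add, integral_const, probReal_univ, smul_eq_mul, one_mul]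
    have h3 : 1 / ((m : ℝ) + 1) ^ 2 ≤ 2 / ((m : ℝ) + 1) - 2 / ((m : ℝ) + 1 + 1) := by
      rw [div_sub_div _ _ (by positivity) (by positivity),
        div_le_div_iff₀ (by positivity) (by positivity)]
      have := Nat.cast_nonneg (α := ℝ) m
      nlinarith [sq_nonneg ((m : ℝ) + 1), mul_nonneg this (sq_nonneg ((m : ℝ) + 1))]
    push_cast
    linarith

/-- `H_m` is an `L²`-bounded martingale, hence converges almost surely. -/
lemma ae_tendsto_Hpart (μ : Measure (ℕ → Bool)) [IsProbabilityMeasure μ]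
    (hp : ∀ k, MeasurePreserving (flipAt k) μ μ) :
    ∀ᵐ ω ∂μ, ∃ l : ℝ, Tendsto (fun m => Hpart ω m) atTop (nhds l) := by
  have hint : ∀ m, Integrable (fun ω => Hpart ω m) μ := fun m =>
    integrable_of_abs_le μ (measurable_Hpart m) m fun ω => abs_Hpart_le ω m
  have hmart : Martingale (fun m ω => Hpart ω m)
      (Filtration.piLE (X := fun _ : ℕ => Bool)) μ := by
    refine martingale_of_setIntegral_eq_succ (fun m => ?_) hint fun m s hs => ?_
    · have : (fun ω => Hpart ω m) = (fun g : (Set.Iic m) → Bool =>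
          Hpart (fun j => if h : j ≤ m then g ⟨j, h⟩ else true) m) ∘ Preorder.restrictLe m := by
        funext ω
        exact Hpart_congr fun j hj => by simp [(Finset.mem_Icc.1 hj).2, Preorder.restrictLe]
      rw [this]
      exact ((measurable_of_countable _).comp
        (comap_measurable (Preorder.restrictLe m))).stronglyMeasurable
    · have hs' : MeasurableSet s := (Filtration.piLE (X := fun _ : ℕ => Bool)).le m s hs
      obtain ⟨t, ht, rfl⟩ := hs
      have hz := integral_mul_sgn_eq_zero (hp (m + 1))
        (g := (Preorder.restrictLe m ⁻¹' t).indicator 1) (measurable_const.indicator hs')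
        fun ω => by
          have : Preorder.restrictLe m (flipAt (m + 1) ω) = Preorder.restrictLe m ω := by
            funext j
            have : (j : ℕ) ≤ m := j.2
            simp [Preorder.restrictLe, flipAt, show (j : ℕ) ≠ m + 1 by omega]
          have hiff : flipAt (m + 1) ω ∈ (Preorder.restrictLe m ⁻¹' t : Set (ℕ → Bool)) ↔
              ω ∈ (Preorder.restrictLe m ⁻¹' t : Set (ℕ → Bool)) := by
            rw [Set.mem_preimage, Set.mem_preimage, this]
          by_cases h : ω ∈ (Preorder.restrictLe m ⁻¹' t : Set (ℕ → Bool))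
          · rw [Set.indicator_of_mem h, Set.indicator_of_mem (hiff.2 h)]; rfl
          · rw [Set.indicator_of_notMem h, Set.indicator_of_notMem (mt hiff.1 h)]
      have hz' : ∫ ω in Preorder.restrictLe m ⁻¹' t, sgn ω (m + 1) ∂μ = 0 := by
        rw [← hz, ← integral_indicator hs']
        congr 1
        funext ω
        by_cases h : ω ∈ (Preorder.restrictLe m ⁻¹' t : Set (ℕ → Bool)) <;> simp [h]
      simp_rw [Hpart_succ]
      rw [integral_add (hint m).integrableOn, integral_div, hz', zero_div, add_zero]
      exact ((integrable_of_abs_le μ (measurable_sgn _) 1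
        fun ω => (abs_sgn ω _).le).div_const _).integrableOn
  refine hmart.submartingale.exists_ae_tendsto_of_bdd (R := 2) fun m => ?_
  rw [eLpNorm_one_eq_lintegral_enorm, ← ofReal_integral_norm_eq_lintegral_enorm (hint m)]
  have hsq := integral_Hpart_sq_le μ hp m
  have i1 : Integrable (fun ω => Hpart ω m ^ 2) μ :=
    integrable_of_abs_le μ ((measurable_Hpart m).pow_const 2) ((m : ℝ) ^ 2) fun ω => by
      rw [abs_pow]; exact pow_le_pow_left₀ (abs_nonneg _) (abs_Hpart_le ω m) 2
  have h1 : ∫ ω, ‖Hpart ω m‖ ∂μ ≤ ∫ ω, (1 + Hpart ω m ^ 2) / 2 ∂μ := by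
    refine integral_mono (hint m).norm (((integrable_const _).add i1).div_const _) fun ω => ?_
    simp only [Real.norm_eq_abs]
    nlinarith [sq_nonneg (|Hpart ω m| - 1), sq_abs (Hpart ω m)]
  rw [integral_div, integral_add (integrable_const _) i1] at h1
  simp only [integral_const, probReal_univ, smul_eq_mul, one_mul] at h1
  have h2 : 0 ≤ 2 / ((m : ℝ) + 1) := by positivity
  have h3 : ∫ ω, ‖Hpart ω m‖ ∂μ ≤ 2 := by linarith
  calc ENNReal.ofReal _ ≤ ENNReal.ofReal 2 := ENNReal.ofReal_le_ofReal h3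
    _ = _ := by simp

/-- `H` has no atoms: flipping coin `k` moves the value `x` to `x ± 2/k`, so the event `H = x`
has infinitely many pairwise disjoint images of the same probability. -/
lemma measure_Hpart_tendsto_eq_zero (μ : Measure (ℕ → Bool)) [IsProbabilityMeasure μ]
    (hp : ∀ k, MeasurePreserving (flipAt k) μ μ) (x : ℝ) :
    μ {ω | Tendsto (fun m => Hpart ω m) atTop (nhds x)} = 0 := by
  set A : Set (ℕ → Bool) := {ω | Tendsto (fun m => Hpart ω m) atTop (nhds x)} with hA
  have hAm : MeasurableSet A := measurableSet_tendsto _ measurable_Hpart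
  have hB : ∀ (k : ℕ) (ω), flipAt (k + 1) ω ∈ A →
      Tendsto (fun m => Hpart ω m) atTop (nhds (x + 2 * sgn ω (k + 1) / ((k + 1 : ℕ) : ℝ))) := by
    intro k ω h
    refine (Tendsto.add_const (2 * sgn ω (k + 1) / ((k + 1 : ℕ) : ℝ)) h).congr' ?_
    filter_upwards [eventually_ge_atTop (k + 1)] with m hm
    rw [Hpart_flipAt_of_le ω (by omega) hm]
    ring
  have hdisj : Pairwise (Function.onFun Disjoint fun k : ℕ => flipAt (k + 1) ⁻¹' A) := by
    intro i j hij
    refine Set.disjoint_left.2 fun ω hi hj => hij ?_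
    have h := tendsto_nhds_unique (hB i ω hi) (hB j ω hj)
    have h' := congrArg abs (add_left_cancel h)
    rw [abs_div, abs_div, abs_mul, abs_mul, abs_sgn, abs_sgn, Nat.abs_cast, Nat.abs_cast,
      div_eq_div_iff (by positivity) (by positivity)] at h'
    norm_num at h'
    exact h'.symm
  have h1 : ∑' k : ℕ, μ (flipAt (k + 1) ⁻¹' A) ≤ 1 := by
    rw [← measure_iUnion hdisj fun k => measurable_flipAt _ hAm]
    exact prob_le_one
  simp_rw [fun k : ℕ => (hp (k + 1)).measure_preimage hAm.nullMeasurableSet] at h1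
  by_contra h0
  rw [ENNReal.tsum_const_eq_top_of_ne_zero h0] at h1
  simp at h1

/-- Convergence in distribution, with a vanishing deterministic shift `δ`. -/
lemma tendsto_measure_Hpart_le (μ : Measure (ℕ → Bool)) [IsProbabilityMeasure μ]
    (hp : ∀ k, MeasurePreserving (flipAt k) μ μ) (x : ℝ) (δ : ℕ → ℝ)
    (hδ : Tendsto δ atTop (nhds 0)) :
    Tendsto (fun m => μ {ω | Hpart ω m + δ m ≤ x}) atTop
      (nhds (μ {ω | ∃ l : ℝ, Tendsto (fun m => Hpart ω m) atTop (nhds l) ∧ l ≤ x})) := by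
  refine tendsto_measure_of_ae_tendsto_indicator_of_isFiniteMeasure atTop ?_
    (fun m => measurableSet_le ((measurable_Hpart m).add_const _) measurable_const) ?_
  · -- on the event of convergence, the limit is the `limsup`
    have : {ω | ∃ l : ℝ, Tendsto (fun m => Hpart ω m) atTop (nhds l) ∧ l ≤ x} =
        {ω | ∃ l : ℝ, Tendsto (fun m => Hpart ω m) atTop (nhds l)} ∩
          {ω | limsup (fun m => Hpart ω m) atTop ≤ x} := by
      ext ω
      constructor
      · rintro ⟨l, hl, hx⟩
        exact ⟨⟨l, hl⟩, by simpa [hl.limsup_eq] using hx⟩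
      · rintro ⟨⟨l, hl⟩, hx⟩
        exact ⟨l, hl, by simpa [hl.limsup_eq] using hx⟩
    rw [this]
    exact (measurableSet_exists_tendsto measurable_Hpart).inter
      (measurableSet_le (Measurable.limsup measurable_Hpart) measurable_const)
  · have hx := measure_Hpart_tendsto_eq_zero μ hp x
    filter_upwards [ae_tendsto_Hpart μ hp, measure_eq_zero_iff_ae_notMem.1 hx] with ω ⟨l, hl⟩ hne
    have hlx : l ≠ x := fun h => hne (by simpa [h] using hl)
    have hs : Tendsto (fun m => Hpart ω m + δ m) atTop (nhds l) := by simpa using hl.add hδ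
    have hmem : (∃ l' : ℝ, Tendsto (fun m => Hpart ω m) atTop (nhds l') ∧ l' ≤ x) ↔ l ≤ x :=
      ⟨fun ⟨l', h1, h2⟩ => tendsto_nhds_unique h1 hl ▸ h2, fun h => ⟨l, hl, h⟩⟩
    rcases lt_or_gt_of_ne hlx with h | h
    · filter_upwards [hs.eventually_lt_const h] with m hm
      simp only [hmem]
      exact ⟨fun _ => h.le, fun _ => hm.le⟩
    · filter_upwards [hs.eventually_const_lt h] with m hm
      simp only [hmem]
      exact ⟨fun h' => absurd h' (not_le.2 hm), fun h' => absurd h' (not_le.2 h)⟩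

/-! ### Finite sets of parts, runs, and the one-step comparison -/

/-- The distinct parts partitions of `N` all of whose parts exceed `m`, encoded as the finite
sets of their parts. -/
def bigSets (m N : ℕ) : Finset (Finset ℕ) :=
  (Finset.Ioc m N).powerset.filter fun S => ∑ a ∈ S, a = N

lemma mem_bigSets {m N : ℕ} {S : Finset ℕ} :
    S ∈ bigSets m N ↔ (∀ a ∈ S, m < a) ∧ ∑ a ∈ S, a = N := by
  simp only [bigSets, Finset.mem_filter, Finset.mem_powerset]
  constructor
  · rintro ⟨h, hs⟩
    exact ⟨fun a ha => (Finset.mem_Ioc.1 (h ha)).1, hs⟩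
  · rintro ⟨h, hs⟩
    refine ⟨fun a ha => Finset.mem_Ioc.2 ⟨h a ha, ?_⟩, hs⟩
    rw [← hs]
    exact Finset.single_le_sum (f := fun a => a) (fun _ _ => Nat.zero_le _) ha

/-- The largest elements of the maximal runs of consecutive integers in `S`. -/
def tops (S : Finset ℕ) : Finset ℕ := S.filter fun a => a + 1 ∉ S

/-- The smallest elements of the maximal runs of consecutive integers in `S`. -/
def bots (S : Finset ℕ) : Finset ℕ := S.filter fun a => a - 1 ∉ S

/-- The parts that can be decreased by one while keeping the parts distinct and `> m`. -/
def downs (m : ℕ) (S : Finset ℕ) : Finset ℕ := S.filter fun a => a - 1 ∉ S ∧ m + 1 < a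

lemma card_tops_eq_card_bots {S : Finset ℕ} (h0 : 0 ∉ S) : (tops S).card = (bots S).card := by
  have h1 := Finset.card_filter_add_card_filter_not (s := S) (fun a => a + 1 ∈ S)
  have h2 := Finset.card_filter_add_card_filter_not (s := S) (fun a => a - 1 ∈ S)
  have h3 : (S.filter fun a => a + 1 ∈ S).card = (S.filter fun a => a - 1 ∈ S).card := by
    refine Finset.card_bij' (fun a _ => a + 1) (fun a _ => a - 1) ?_ ?_ ?_ ?_
    · intro a ha; simp_all
    · intro a ha
      simp only [Finset.mem_filter] at ha ⊢
      have : a ≠ 0 := fun h => h0 (h ▸ ha.1)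
      rw [show a - 1 + 1 = a by omega]; tauto
    · intro a ha; simp
    · intro a ha
      simp only [Finset.mem_filter] at ha
      have : a ≠ 0 := fun h => h0 (h ▸ ha.1)
      omega
  unfold tops bots
  omega

lemma card_tops_le_card_downs_add_one {m : ℕ} {S : Finset ℕ} (hS : ∀ a ∈ S, m < a) :
    (tops S).card ≤ (downs m S).card + 1 := by
  have h0 : 0 ∉ S := fun h => by have := hS 0 h; omega
  rw [card_tops_eq_card_bots h0]
  have : bots S ⊆ insert (m + 1) (downs m S) := by
    intro a ha
    simp only [bots, Finset.mem_filter] at ha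
    have := hS a ha.1
    simp only [downs, Finset.mem_insert, Finset.mem_filter]
    by_cases h : a = m + 1
    · exact Or.inl h
    · exact Or.inr ⟨ha.1, ha.2, by omega⟩
  exact (Finset.card_le_card this).trans (Finset.card_insert_le _ _)

/-- Decrease the part `a` by one. -/
def lower (S : Finset ℕ) (a : ℕ) : Finset ℕ := insert (a - 1) (S.erase a)

lemma lower_mem_bigSets {m N : ℕ} {S : Finset ℕ} (hS : S ∈ bigSets m (N + 1)) {a : ℕ}
    (ha : a ∈ downs m S) : lower S a ∈ bigSets m N := by
  rw [mem_bigSets] at hS ⊢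
  simp only [downs, Finset.mem_filter] at ha
  obtain ⟨ha, ha1, ham⟩ := ha
  constructor
  · intro b hb
    simp only [lower, Finset.mem_insert, Finset.mem_erase] at hb
    rcases hb with rfl | hb
    · omega
    · exact hS.1 b hb.2
  · have h1 : a - 1 ∉ S.erase a := fun h => ha1 (Finset.mem_of_mem_erase h)
    have h2 := Finset.add_sum_erase S (fun a => a) ha
    simp only [lower]
    rw [Finset.sum_insert h1]
    omega

lemma mem_tops_lower {m : ℕ} {S : Finset ℕ} {a : ℕ} (ha : a ∈ downs m S) :
    a - 1 ∈ tops (lower S a) := by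
  simp only [downs, Finset.mem_filter] at ha
  simp only [tops, lower, Finset.mem_filter, Finset.mem_insert, Finset.mem_erase]
  rw [show a - 1 + 1 = a by omega]
  refine ⟨by simp, ?_⟩
  simp
  omega

lemma lower_inj {m : ℕ} {S S' : Finset ℕ} {a a' : ℕ} (ha : a ∈ downs m S) (ha' : a' ∈ downs m S')
    (hS : lower S a = lower S' a') (h : a - 1 = a' - 1) : S = S' ∧ a = a' := by
  simp only [downs, Finset.mem_filter] at ha ha'
  obtain rfl : a = a' := by omega
  refine ⟨?_, rfl⟩
  have key : ∀ T : Finset ℕ, a ∈ T → a - 1 ∉ T → T = insert a ((lower T a).erase (a - 1)) := by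
    intro T h1 h2
    rw [lower, Finset.erase_insert (fun h => h2 (Finset.mem_of_mem_erase h)),
      Finset.insert_erase h1]
  rw [key S ha.1 ha.2.1, key S' ha'.1 ha'.2.1, hS]

/-- Along an edge `S → lower S a` of the graph of decreasing one part by one, the number of edges
into `lower S a` exceeds the number of edges out of `S` by at most two. -/
lemma card_tops_lower_le {m : ℕ} {S : Finset ℕ} (hS : ∀ a ∈ S, m < a) {a : ℕ}
    (ha : a ∈ downs m S) : (tops (lower S a)).card ≤ (downs m S).card + 2 := by
  have hsub : tops (lower S a) ⊆ insert (a - 1) (tops S) := by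
    intro b hb
    simp only [downs, Finset.mem_filter] at ha
    simp only [tops, lower, Finset.mem_filter, Finset.mem_insert, Finset.mem_erase] at hb ⊢
    obtain ⟨hb1, hb2⟩ := hb
    rcases hb1 with rfl | hb1
    · exact Or.inl rfl
    · refine Or.inr ⟨hb1.2, fun h => hb2 (Or.inr ⟨?_, h⟩)⟩
      rintro rfl
      exact ha.2.1 (by simpa using hb1.2)
  have h1 := (Finset.card_le_card hsub).trans (Finset.card_insert_le _ _)
  have h2 := card_tops_le_card_downs_add_one hS
  omega

/-- Double counting of the edges `S → lower S a`, each weighted by the inverse of the degree of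
`S` on one side and of `lower S a` on the other. -/
lemma card_many_downs_le (m N K : ℕ) (hK : 1 ≤ K) :
    (((bigSets m (N + 1)).filter fun S => K ≤ (downs m S).card).card : ℝ) ≤
      (1 + 2 / (K : ℝ)) * ((bigSets m N).card : ℝ) := by
  have hK' : (0 : ℝ) < K := by exact_mod_cast hK
  set F := (bigSets m (N + 1)).filter fun S => K ≤ (downs m S).card with hF
  have hFmem : ∀ S ∈ F, S ∈ bigSets m (N + 1) ∧ K ≤ (downs m S).card := fun S hS =>
    Finset.mem_filter.1 hS
  clear_value F
  let E := F.sigma fun S => downs m S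
  let E' := (bigSets m N).sigma fun T => tops T
  let φ : (Σ _ : Finset ℕ, ℕ) → (Σ _ : Finset ℕ, ℕ) := fun e => ⟨lower e.1 e.2, e.2 - 1⟩
  calc ((F.card : ℕ) : ℝ) = ∑ S ∈ F, ∑ a ∈ downs m S, (1 : ℝ) / (downs m S).card := by
        rw [Finset.card_eq_sum_ones, Nat.cast_sum]
        refine Finset.sum_congr rfl fun S hS => ?_
        have : (0 : ℝ) < (downs m S).card := by
          exact_mod_cast lt_of_lt_of_le hK (hFmem S hS).2
        rw [Finset.sum_const, nsmul_eq_mul]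
        field_simp
        simp
    _ = ∑ e ∈ E, (1 : ℝ) / (downs m e.1).card := by
        rw [Finset.sum_sigma]
    _ ≤ ∑ e ∈ E, (1 + 2 / (K : ℝ)) * (1 / ((tops (φ e).1).card : ℝ)) := by
        refine Finset.sum_le_sum fun e he => ?_
        obtain ⟨h1, h2⟩ := Finset.mem_sigma.1 he
        obtain ⟨h3, h4⟩ := hFmem _ h1
        have h5 : ((tops (lower e.1 e.2)).card : ℝ) ≤ (downs m e.1).card + 2 := by
          exact_mod_cast card_tops_lower_le (mem_bigSets.1 h3).1 h2
        have h6 : (0 : ℝ) < (tops (lower e.1 e.2)).card := by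
          exact_mod_cast Finset.card_pos.2 ⟨_, mem_tops_lower h2⟩
        have h7 : (K : ℝ) ≤ (downs m e.1).card := by exact_mod_cast h4
        have h8 : (0 : ℝ) < (downs m e.1).card := lt_of_lt_of_le hK' h7
        change _ ≤ (1 + 2 / (K : ℝ)) * (1 / ((tops (lower e.1 e.2)).card : ℝ))
        rw [mul_one_div, div_le_div_iff₀ h8 h6, one_mul]
        refine h5.trans ?_
        have : 2 ≤ 2 / (K : ℝ) * (downs m e.1).card := by
          rw [div_mul_eq_mul_div, le_div_iff₀ hK']; linarith
        linarith
    _ = (1 + 2 / (K : ℝ)) * ∑ e ∈ E, (1 / ((tops (φ e).1).card : ℝ)) := by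
        rw [Finset.mul_sum]
    _ ≤ (1 + 2 / (K : ℝ)) * ∑ e ∈ E', (1 / ((tops e.1).card : ℝ)) := by
        refine mul_le_mul_of_nonneg_left ?_ (by positivity)
        have hinj : Set.InjOn φ E := by
          rintro ⟨S, a⟩ he ⟨S', a'⟩ he' h
          have h1 := (Finset.mem_sigma.1 he).2
          have h2 := (Finset.mem_sigma.1 he').2
          simp only [φ, Sigma.mk.injEq, heq_eq_eq] at h
          obtain ⟨rfl, rfl⟩ := lower_inj h1 h2 h.1 h.2
          rfl
        rw [← Finset.sum_image (f := fun e => 1 / ((tops e.1).card : ℝ)) hinj]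
        refine Finset.sum_le_sum_of_subset_of_nonneg ?_ fun _ _ _ => by positivity
        intro e he
        obtain ⟨e, he', rfl⟩ := Finset.mem_image.1 he
        obtain ⟨h1, h2⟩ := Finset.mem_sigma.1 he'
        exact Finset.mem_sigma.2
          ⟨lower_mem_bigSets (hFmem _ h1).1 h2, mem_tops_lower h2⟩
    _ ≤ (1 + 2 / (K : ℝ)) * ((bigSets m N).card : ℝ) := by
        refine mul_le_mul_of_nonneg_left ?_ (by positivity)
        rw [Finset.sum_sigma, Finset.card_eq_sum_ones, Nat.cast_sum]
        refine Finset.sum_le_sum fun T _ => ?_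
        change ∑ _ ∈ tops T, 1 / ((tops T).card : ℝ) ≤ _
        rw [Finset.sum_const, nsmul_eq_mul, mul_one_div]
        exact (div_self_le_one _).trans (by simp)

/-- A set of positive integers is determined by the ends of its runs. -/
lemma eq_of_tops_eq_bots_eq {S T : Finset ℕ} (hS : 0 ∉ S) (hT : 0 ∉ T)
    (ht : tops S = tops T) (hb : bots S = bots T) : S = T := by
  have step : ∀ (U : Finset ℕ) (a : ℕ), a + 1 ∈ U ↔ (a ∈ U ∧ a ∉ tops U) ∨ a + 1 ∈ bots U := by
    intro U a
    simp only [tops, bots, Finset.mem_filter, Nat.add_sub_cancel]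
    tauto
  ext a
  induction a with
  | zero => simp [hS, hT]
  | succ a ih => rw [step S, step T, ih, ht, hb]

lemma card_small_subsets_le (N K : ℕ) :
    ((Finset.range N).powerset.filter fun S => S.card ≤ K).card ≤ (N + 1) ^ K := by
  have hsub : ((Finset.range N).powerset.filter fun S => S.card ≤ K) ⊆
      (Finset.range (K + 1)).biUnion fun j => (Finset.range N).powersetCard j := by
    intro S hS
    simp only [Finset.mem_filter, Finset.mem_powerset] at hS
    simp only [Finset.mem_biUnion, Finset.mem_range, Finset.mem_powersetCard]
    exact ⟨S.card, by omega, hS.1, rfl⟩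
  refine (Finset.card_le_card hsub).trans (Finset.card_biUnion_le.trans ?_)
  simp only [Finset.card_powersetCard, Finset.card_range]
  rw [add_pow]
  refine Finset.sum_le_sum fun j hj => ?_
  rw [one_pow, mul_one]
  have h1 : 1 ≤ K.choose j := Nat.choose_pos (by simpa [Nat.lt_succ_iff] using hj)
  exact (Nat.choose_le_pow N j).trans (Nat.le_mul_of_pos_right _ h1)

/-- Fewer than `K` decreasable parts force at most `K` runs, and the ends of its runs determine
the set. -/
lemma card_few_downs_le (m N K : ℕ) :
    ((bigSets m N).filter fun S => ¬ K ≤ (downs m S).card).card ≤ (N + 2) ^ (2 * K) := by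
  set P := (Finset.range (N + 1)).powerset.filter fun S => S.card ≤ K with hP
  have h1 : ((bigSets m N).filter fun S => ¬ K ≤ (downs m S).card).card ≤ (P ×ˢ P).card := by
    refine Finset.card_le_card_of_injOn (fun S => (tops S, bots S)) ?_ ?_
    · intro S hS
      obtain ⟨hS, hK⟩ := Finset.mem_filter.1 hS
      have h0 : 0 ∉ S := fun h => by have := (mem_bigSets.1 hS).1 0 h; omega
      have hc := card_tops_le_card_downs_add_one (mem_bigSets.1 hS).1
      have hsub : S ⊆ Finset.range (N + 1) := fun a ha => by
        have := (Finset.mem_Ioc.1 (Finset.mem_powerset.1 (Finset.mem_filter.1 hS).1 ha)).2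
        simp; omega
      simp only [Finset.coe_product, Set.mem_prod, Finset.mem_coe, hP, Finset.mem_filter,
        Finset.mem_powerset]
      refine ⟨⟨(Finset.filter_subset _ _).trans hsub, by omega⟩,
        (Finset.filter_subset _ _).trans hsub, ?_⟩
      rw [← card_tops_eq_card_bots h0]; omega
    · intro S hS T hT h
      have hS := (mem_bigSets.1 (Finset.mem_filter.1 hS).1).1
      have hT := (mem_bigSets.1 (Finset.mem_filter.1 hT).1).1
      simp only [Prod.mk.injEq] at h
      exact eq_of_tops_eq_bots_eq (fun h => by have := hS 0 h; omega)
        (fun h => by have := hT 0 h; omega) h.1 h.2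
  refine h1.trans ?_
  rw [Finset.card_product, two_mul, pow_add]
  exact Nat.mul_le_mul (card_small_subsets_le _ _) (card_small_subsets_le _ _)

lemma card_bigSets_succ_le (m N K : ℕ) (hK : 1 ≤ K) :
    ((bigSets m (N + 1)).card : ℝ) ≤
      (1 + 2 / (K : ℝ)) * ((bigSets m N).card : ℝ) + ((N + 3 : ℕ) : ℝ) ^ (2 * K) := by
  rw [← Finset.card_filter_add_card_filter_not (s := bigSets m (N + 1))
    (fun S => K ≤ (downs m S).card), Nat.cast_add]
  refine add_le_add (card_many_downs_le m N K hK) ?_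
  exact_mod_cast card_few_downs_le m (N + 1) K

lemma card_bigSets_add_le (m n K : ℕ) (hK : 1 ≤ K) (M N : ℕ) (h : N + M ≤ n) :
    ((bigSets m (N + M)).card : ℝ) ≤
      (1 + 2 / (K : ℝ)) ^ M * ((bigSets m N).card + M * ((n + 2 : ℕ) : ℝ) ^ (2 * K)) := by
  induction M with
  | zero => simp
  | succ M ih =>
    have h1 := card_bigSets_succ_le m (N + M) K hK
    have h2 := ih (by omega)
    have h3 : (((N + M) + 3 : ℕ) : ℝ) ^ (2 * K) ≤ ((n + 2 : ℕ) : ℝ) ^ (2 * K) := by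
      exact pow_le_pow_left₀ (by positivity) (by exact_mod_cast (by omega)) _
    have h4 : (1 : ℝ) ≤ (1 + 2 / (K : ℝ)) ^ (M + 1) := one_le_pow₀ (by
      have : 0 ≤ 2 / (K : ℝ) := by positivity
      linarith)
    have h5 : (0 : ℝ) ≤ ((n + 2 : ℕ) : ℝ) ^ (2 * K) := by positivity
    calc ((bigSets m (N + M + 1)).card : ℝ) ≤ _ := h1
      _ ≤ (1 + 2 / (K : ℝ)) * ((1 + 2 / (K : ℝ)) ^ M *
            ((bigSets m N).card + M * ((n + 2 : ℕ) : ℝ) ^ (2 * K))) +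
            (1 + 2 / (K : ℝ)) ^ (M + 1) * ((n + 2 : ℕ) : ℝ) ^ (2 * K) :=
          add_le_add (by gcongr) (h3.trans (le_mul_of_one_le_left h5 h4))
      _ = _ := by push_cast; ring

/-- Enlarging the largest part by one is injective. -/
lemma card_bigSets_mono_succ (m N : ℕ) (hN : 1 ≤ N) :
    (bigSets m N).card ≤ (bigSets m (N + 1)).card := by
  have hne : ∀ S ∈ bigSets m N, S.Nonempty := fun S hS => by
    rw [Finset.nonempty_iff_ne_empty]
    rintro rfl
    have := (mem_bigSets.1 hS).2
    simp at this; omega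
  let ψ : Finset ℕ → Finset ℕ := fun S => insert (S.sup id + 1) (S.erase (S.sup id))
  have hmem : ∀ S ∈ bigSets m N, S.sup id ∈ S := fun S hS => by
    obtain ⟨a, ha, h⟩ := Finset.exists_mem_eq_sup S (hne S hS) id
    rw [h]; exact ha
  have hnot : ∀ S : Finset ℕ, S.sup id + 1 ∉ S := fun S h => by
    have : id (S.sup id + 1) ≤ S.sup id := Finset.le_sup (f := id) h
    exact absurd this (Nat.not_succ_le_self _)
  have hsup : ∀ S : Finset ℕ, (ψ S).sup id = S.sup id + 1 := fun S => by
    simp only [ψ, Finset.sup_insert, id]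
    refine sup_eq_left.2 ((Finset.sup_mono (Finset.erase_subset _ _)).trans (Nat.le_succ _))
  refine Finset.card_le_card_of_injOn ψ ?_ ?_
  · intro S hS
    have h1 := mem_bigSets.1 hS
    refine mem_bigSets.2 ⟨fun a ha => ?_, ?_⟩
    · rcases Finset.mem_insert.1 ha with rfl | ha
      · have := h1.1 _ (hmem S hS); omega
      · exact h1.1 a (Finset.mem_of_mem_erase ha)
    · simp only [ψ]
      rw [Finset.sum_insert (fun h => hnot S (Finset.mem_of_mem_erase h))]
      have := Finset.add_sum_erase S (fun a => a) (hmem S hS)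
      omega
  · intro S hS T hT h
    have key : ∀ U ∈ bigSets m N, U = insert ((ψ U).sup id - 1) ((ψ U).erase ((ψ U).sup id)) := by
      intro U hU
      rw [hsup]
      simp only [ψ]
      rw [Finset.erase_insert (fun h => hnot U (Finset.mem_of_mem_erase h)), Nat.add_sub_cancel,
        Finset.insert_erase (hmem U hU)]
    rw [key S hS, key T hT, h]

lemma card_bigSets_mono (m : ℕ) {N N' : ℕ} (hN : 1 ≤ N) (h : N ≤ N') :
    (bigSets m N).card ≤ (bigSets m N').card := by
  induction N', h using Nat.le_induction with
  | base => rfl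
  | succ k hk ih => exact ih.trans (card_bigSets_mono_succ m k (by omega))

/-- Any subset of `(m, h]` can be completed by one large part. -/
lemma two_pow_le_card_bigSets (m n h : ℕ) (hm : m ≤ h) (h4 : 4 ≤ h) (hn : h ^ 2 ≤ n) :
    2 ^ (h - m) ≤ (bigSets m n).card := by
  have hsum : ∀ S ⊆ Finset.Ioc m h, (∑ a ∈ S, a) + h < n := by
    intro S hS
    have h1 : ∑ a ∈ S, a ≤ ∑ a ∈ Finset.range (h + 1), a :=
      Finset.sum_le_sum_of_subset fun a ha => by
        have := (Finset.mem_Ioc.1 (hS ha)).2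
        simp; omega
    have h2 := Finset.sum_range_id_mul_two (h + 1)
    simp only [Nat.add_sub_cancel] at h2
    nlinarith
  have hc : ((Finset.Ioc m h).powerset).card = 2 ^ (h - m) := by simp
  rw [← hc]
  refine Finset.card_le_card_of_injOn (fun S => insert (n - ∑ a ∈ S, a) S) ?_ ?_
  · intro S hS
    have hS := Finset.mem_powerset.1 hS
    have h1 := hsum S hS
    refine mem_bigSets.2 ⟨fun a ha => ?_, ?_⟩
    · rcases Finset.mem_insert.1 ha with rfl | ha
      · omega
      · exact (Finset.mem_Ioc.1 (hS ha)).1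
    · rw [Finset.sum_insert]
      · omega
      · intro h'
        have := (Finset.mem_Ioc.1 (hS h')).2
        omega
  · intro S hS T hT heq
    have key : ∀ U ∈ (Finset.Ioc m h).powerset,
        (insert (n - ∑ a ∈ U, a) U).filter (fun a => a ≤ h) = U := by
      intro U hU
      have hU := Finset.mem_powerset.1 hU
      have h1 := hsum U hU
      rw [Finset.filter_insert, if_neg (by omega), Finset.filter_true_of_mem]
      exact fun a ha => (Finset.mem_Ioc.1 (hU ha)).2
    simp only at heq
    rw [← key S hS, ← key T hT, heq]

/-! ### Reduction of `Pn` to counting small parts -/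

lemma parts_eq_toFinset_val {n : ℕ} {lam : n.Partition} (h : lam.parts.Nodup) :
    lam.parts = lam.parts.toFinset.val := by
  rw [Multiset.toFinset_val, h.dedup]

/-- Splitting a distinct parts partition of `n` into its parts `≤ m` and its parts `> m`. -/
lemma card_distincts_filter (n m : ℕ) (hM : ∑ k ∈ Finset.Icc 1 m, k ≤ n)
    (p : Finset ℕ → Prop) [DecidablePred p] :
    ((Nat.Partition.distincts n).filter
      fun lam => p ((Finset.Icc 1 m).filter fun k => k ∈ lam.parts)).card =
    ∑ T ∈ (Finset.Icc 1 m).powerset.filter p, (bigSets m (n - ∑ k ∈ T, k)).card := by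
  rw [Finset.card_eq_sum_card_fiberwise
    (f := fun lam : n.Partition => (Finset.Icc 1 m).filter fun k => k ∈ lam.parts)
    (t := (Finset.Icc 1 m).powerset.filter p)]
  · refine Finset.sum_congr rfl fun T hT => ?_
    obtain ⟨hTsub, hpT⟩ := Finset.mem_filter.1 hT
    have hTsub := Finset.mem_powerset.1 hTsub
    have hTn : ∑ k ∈ T, k ≤ n := (Finset.sum_le_sum_of_subset hTsub).trans hM
    have hdecomp : ∀ lam : n.Partition,
        (Finset.Icc 1 m).filter (fun k => k ∈ lam.parts) = T →
        lam.parts.toFinset = T ∪ lam.parts.toFinset.filter fun k => m < k := by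
      rintro lam rfl
      ext k
      simp only [Multiset.mem_toFinset, Finset.mem_union, Finset.mem_filter, Finset.mem_Icc]
      constructor
      · intro hk
        have := lam.parts_pos hk
        by_cases h : m < k
        · exact Or.inr ⟨hk, h⟩
        · exact Or.inl ⟨⟨this, by omega⟩, hk⟩
      · rintro (h | h)
        · exact h.2
        · exact h.1
    have hdisj : ∀ S : Finset ℕ, (∀ k ∈ S, m < k) → Disjoint T S := fun S hS =>
      Finset.disjoint_left.2 fun k hk hk' => by
        have := (Finset.mem_Icc.1 (hTsub hk)).2
        have := hS k hk'
        omega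
    refine Finset.card_bij (fun lam _ => lam.parts.toFinset.filter fun k => m < k) ?_ ?_ ?_
    · intro lam hlam
      simp only [Finset.mem_filter, Nat.Partition.distincts, Finset.mem_univ, true_and] at hlam
      obtain ⟨⟨hnd, -⟩, hsm⟩ := hlam
      refine mem_bigSets.2 ⟨fun a ha => (Finset.mem_filter.1 ha).2, ?_⟩
      have h1 : ∑ k ∈ lam.parts.toFinset, k = n := by
        have h := lam.parts_sum
        rw [parts_eq_toFinset_val hnd] at h
        simpa [Finset.sum] using h
      rw [hdecomp lam hsm, Finset.sum_union (hdisj _ fun k hk => (Finset.mem_filter.1 hk).2)] at h1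
      change ∑ x ∈ T, x + ∑ x ∈ lam.parts.toFinset.filter (fun k => m < k), x = n at h1
      omega
    · intro lam hlam lam' hlam' h
      simp only [Finset.mem_filter, Nat.Partition.distincts, Finset.mem_univ, true_and]
        at hlam hlam'
      refine Nat.Partition.ext ?_
      rw [parts_eq_toFinset_val hlam.1.1, parts_eq_toFinset_val hlam'.1.1, hdecomp _ hlam.2,
        hdecomp _ hlam'.2, h]
    · intro S hS
      obtain ⟨hSm, hSs⟩ := mem_bigSets.1 hS
      have hd := hdisj S hSm
      let lam : n.Partition :=
        { parts := (T ∪ S).val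
          parts_pos := by
            intro i hi
            rcases Finset.mem_union.1 (Finset.mem_def.2 hi) with h | h
            · exact (Finset.mem_Icc.1 (hTsub h)).1
            · exact Nat.zero_lt_of_lt (hSm i h)
          parts_sum := by
            have : ∑ k ∈ T ∪ S, k = n := by rw [Finset.sum_union hd]; omega
            simpa [Finset.sum] using this }
      have hsm : (Finset.Icc 1 m).filter (fun k => k ∈ lam.parts) = T := by
        ext k
        simp only [lam, Finset.mem_filter, Finset.mem_val, Finset.mem_union]
        constructor
        · rintro ⟨h1, h2 | h2⟩
          · exact h2
          · have := hSm k h2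
            have := (Finset.mem_Icc.1 h1).2
            omega
        · exact fun h => ⟨hTsub h, Or.inl h⟩
      refine ⟨lam, ?_, ?_⟩
      · simp only [Finset.mem_filter, Nat.Partition.distincts, Finset.mem_univ, true_and]
        refine ⟨⟨(T ∪ S).nodup, ?_⟩, hsm⟩
        rw [hsm]; exact hpT
      · ext k
        simp only [lam, Finset.mem_filter, Multiset.mem_toFinset, Finset.mem_val,
          Finset.mem_union]
        constructor
        · rintro ⟨h1 | h1, h2⟩
          · have := (Finset.mem_Icc.1 (hTsub h1)).2
            omega
          · exact h1
        · exact fun h => ⟨Or.inr h, hSm k h⟩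
  · intro lam hlam
    simp only [Finset.coe_filter, Set.mem_ofPred_eq] at hlam ⊢
    exact ⟨Finset.mem_powerset.2 (Finset.filter_subset _ _), hlam.2⟩

/-- The two-sided comparison of `Pn` with the uniform measure on subsets of `{1, …, m}`, when
`N = n - (1 + ⋯ + m)` is positive. -/
lemma Pn_bounds (n m N : ℕ) (hN : 1 ≤ N) (hM : N + ∑ k ∈ Finset.Icc 1 m, k = n)
    (hpos : 0 < (bigSets m N).card) (p : Finset ℕ → Prop) [DecidablePred p]
    (a r : ℝ) (ha : a = ((Finset.Icc 1 m).powerset.filter p).card / (2 : ℝ) ^ m)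
    (hr : r = (bigSets m N).card / (bigSets m n).card) :
    a * r ≤ Pn n (fun lam => p ((Finset.Icc 1 m).filter fun k => k ∈ lam.parts)) ∧
    Pn n (fun lam => p ((Finset.Icc 1 m).filter fun k => k ∈ lam.parts)) ≤ a / r := by
  have hq : ∀ T ∈ (Finset.Icc 1 m).powerset,
      (bigSets m N).card ≤ (bigSets m (n - ∑ k ∈ T, k)).card ∧
      (bigSets m (n - ∑ k ∈ T, k)).card ≤ (bigSets m n).card := by
    intro T hT
    have : ∑ k ∈ T, k ≤ ∑ k ∈ Finset.Icc 1 m, k :=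
      Finset.sum_le_sum_of_subset (Finset.mem_powerset.1 hT)
    exact ⟨card_bigSets_mono m hN (by omega), card_bigSets_mono m (by omega) (by omega)⟩
  have hb : ∀ (p : Finset ℕ → Prop) [DecidablePred p],
      ((Finset.Icc 1 m).powerset.filter p).card * (bigSets m N).card ≤
        ((Nat.Partition.distincts n).filter
          fun lam => p ((Finset.Icc 1 m).filter fun k => k ∈ lam.parts)).card ∧
      ((Nat.Partition.distincts n).filter
          fun lam => p ((Finset.Icc 1 m).filter fun k => k ∈ lam.parts)).card ≤
        ((Finset.Icc 1 m).powerset.filter p).card * (bigSets m n).card := by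
    intro p _
    rw [card_distincts_filter n m (by omega) p]
    constructor
    · rw [← smul_eq_mul]
      exact Finset.card_nsmul_le_sum _ _ _ fun T hT => (hq T (Finset.mem_filter.1 hT).1).1
    · rw [← smul_eq_mul]
      exact Finset.sum_le_card_nsmul _ _ _ fun T hT => (hq T (Finset.mem_filter.1 hT).1).2
  have hnum := hb p
  have hden := hb fun _ => True
  simp only [Finset.filter_true, Finset.card_powerset, Nat.card_Icc, Nat.add_sub_cancel] at hden
  have hPn : Pn n (fun lam => p ((Finset.Icc 1 m).filter fun k => k ∈ lam.parts)) =
      (((Nat.Partition.distincts n).filter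
          fun lam => p ((Finset.Icc 1 m).filter fun k => k ∈ lam.parts)).card : ℝ) /
        ((Nat.Partition.distincts n).card : ℝ) := by
    unfold Pn
    congr!
  have hposn : 0 < (bigSets m n).card :=
    lt_of_lt_of_le hpos (card_bigSets_mono m hN (by omega))
  rw [hPn, ha, hr]
  generalize ((Nat.Partition.distincts n).filter
          fun lam => p ((Finset.Icc 1 m).filter fun k => k ∈ lam.parts)).card = u at hnum
  generalize (Nat.Partition.distincts n).card = d at hden
  generalize ((Finset.Icc 1 m).powerset.filter p).card = c at hnum
  generalize (bigSets m n).card = q at *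
  generalize (bigSets m N).card = q' at *
  have e1 : (c : ℝ) * q' ≤ u := by exact_mod_cast hnum.1
  have e2 : (u : ℝ) ≤ c * q := by exact_mod_cast hnum.2
  have e3 : (2 : ℝ) ^ m * q' ≤ d := by exact_mod_cast hden.1
  have e4 : (d : ℝ) ≤ 2 ^ m * q := by exact_mod_cast hden.2
  have e5 : (0 : ℝ) < q' := by exact_mod_cast hpos
  have e6 : (0 : ℝ) < q := by exact_mod_cast hposn
  have e7 : (0 : ℝ) < 2 ^ m * q' := by positivity
  constructor
  · rw [div_mul_div_comm]
    exact div_le_div₀ (by positivity) e1 (lt_of_lt_of_le e7 e3) e4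
  · rw [div_div_div_eq]
    exact div_le_div₀ (by positivity) e2 e7 e3

lemma measure_eq_card_div (μ : Measure (ℕ → Bool)) [IsProbabilityMeasure μ]
    (hμ : ∀ (s : Finset ℕ) (f : ℕ → Bool),
      μ {ω | ∀ k ∈ s, ω k = f k} = (1 / 2 : ℝ≥0∞) ^ s.card)
    (m : ℕ) (p : Finset ℕ → Prop) [DecidablePred p] :
    (μ {ω | p ((Finset.Icc 1 m).filter fun k => ω k = true)}).toReal =
      ((Finset.Icc 1 m).powerset.filter p).card / (2 : ℝ) ^ m := by
  have hset : {ω : ℕ → Bool | p ((Finset.Icc 1 m).filter fun k => ω k = true)} =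
      ⋃ T ∈ (Finset.Icc 1 m).powerset.filter p,
        {ω | ∀ k ∈ Finset.Icc 1 m, ω k = decide (k ∈ T)} := by
    ext ω
    simp only [Set.mem_ofPred_eq, Set.mem_iUnion, exists_prop, Finset.mem_filter,
      Finset.mem_powerset]
    constructor
    · intro h
      refine ⟨_, ⟨Finset.filter_subset _ _, h⟩, fun k hk => ?_⟩
      simp only [Finset.mem_filter, hk, true_and]
      cases ω k <;> simp
    · rintro ⟨T, ⟨hT, hp⟩, h⟩
      have : (Finset.Icc 1 m).filter (fun k => ω k = true) = T := by
        ext k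
        simp only [Finset.mem_filter]
        constructor
        · rintro ⟨hk, h1⟩
          rw [h k hk] at h1
          simpa using h1
        · intro hk
          exact ⟨hT hk, by rw [h k (hT hk)]; simpa using hk⟩
      rw [this]; exact hp
  rw [hset, measure_biUnion_finset]
  · simp_rw [hμ]
    simp only [Nat.card_Icc, Nat.add_sub_cancel, Finset.sum_const, nsmul_eq_mul]
    simp [div_eq_mul_inv]
  · intro T hT T' hT' hne
    refine Set.disjoint_left.2 fun ω h h' => hne ?_
    have hT := Finset.mem_powerset.1 (Finset.mem_filter.1 hT).1
    have hT' := Finset.mem_powerset.1 (Finset.mem_filter.1 hT').1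
    ext k
    by_cases hk : k ∈ Finset.Icc 1 m
    · have := (h k hk).symm.trans (h' k hk)
      simpa using this
    · exact ⟨fun h => absurd (hT h) hk, fun h => absurd (hT' h) hk⟩
  · intro T _
    have : {ω : ℕ → Bool | ∀ k ∈ Finset.Icc 1 m, ω k = decide (k ∈ T)} =
        ⋂ k ∈ Finset.Icc 1 m, (fun ω : ℕ → Bool => ω k) ⁻¹' {decide (k ∈ T)} := by
      ext ω; simp
    rw [this]
    exact Finset.measurableSet_biInter _ fun k _ =>
      measurable_pi_apply k (measurableSet_singleton _)

/-! ### Asymptotics -/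

lemma kn_pow_le (n : ℕ) : kn n ^ 5 ≤ n := by
  have h1 : (kn n : ℝ) ≤ (n : ℝ) ^ ((1 : ℝ) / 5) := Nat.floor_le (by positivity)
  have h2 : (kn n : ℝ) ^ 5 ≤ ((n : ℝ) ^ ((1 : ℝ) / 5)) ^ 5 := pow_le_pow_left₀ (by positivity) h1 5
  rw [← Real.rpow_natCast ((n : ℝ) ^ ((1 : ℝ) / 5)), ← Real.rpow_mul (by positivity)] at h2
  norm_num at h2
  exact_mod_cast h2

lemma lt_kn_succ_pow (n : ℕ) : n < (kn n + 1) ^ 5 := by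
  have h1 : (n : ℝ) ^ ((1 : ℝ) / 5) < kn n + 1 := Nat.lt_floor_add_one _
  have h2 : ((n : ℝ) ^ ((1 : ℝ) / 5)) ^ 5 < ((kn n : ℝ) + 1) ^ 5 :=
    pow_lt_pow_left₀ h1 (by positivity) (by norm_num)
  rw [← Real.rpow_natCast ((n : ℝ) ^ ((1 : ℝ) / 5)), ← Real.rpow_mul (by positivity)] at h2
  norm_num at h2
  exact_mod_cast h2

lemma tendsto_kn : Tendsto kn atTop atTop :=
  tendsto_nat_floor_atTop.comp
    ((tendsto_rpow_atTop (by norm_num)).comp tendsto_natCast_atTop_atTop)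

lemma sum_Icc_id_le (m : ℕ) : ∑ k ∈ Finset.Icc 1 m, k ≤ m ^ 2 := by
  refine (Finset.sum_le_card_nsmul _ _ m fun k hk => (Finset.mem_Icc.1 hk).2).trans ?_
  simp [pow_two]

lemma log_sq_le_sqrt {m : ℕ} (hm : 2 ^ 30 ≤ m) :
    16 * (Nat.log 2 m + 1) ^ 2 ≤ Nat.sqrt m := by
  set L := Nat.log 2 m with hL
  have hL30 : 30 ≤ L := (Nat.le_log_iff_pow_le (by norm_num) (by omega)).2 hm
  have hpow : 2 ^ L ≤ m := Nat.pow_log_le_self 2 (by omega)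
  have h1 : ∀ j : ℕ, 15 ≤ j → 64 * (j + 1) ^ 2 ≤ 2 ^ j := by
    intro j hj
    induction j, hj using Nat.le_induction with
    | base => norm_num
    | succ j hj ih =>
      have h2j : 2 ^ (j + 1) = 2 ^ j * 2 := pow_succ 2 j
      nlinarith
  have h2 := h1 (L / 2) (by omega)
  have h3 : 2 ^ (L / 2) ≤ Nat.sqrt m := by
    rw [Nat.le_sqrt, ← pow_add]
    exact (Nat.pow_le_pow_right (by norm_num) (by omega)).trans hpow
  have h4 : L + 1 ≤ 2 * (L / 2 + 1) := by omega
  have h5 : (L + 1) ^ 2 ≤ (2 * (L / 2 + 1)) ^ 2 := Nat.pow_le_pow_left h4 2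
  rw [mul_pow] at h5
  omega

/-- With `K = m² (⌊log₂ m⌋ + 1)`, the accumulated number of partitions with fewer than `K`
decreasable parts is negligible against the total number of partitions into distinct parts `> m`, which is at least
`2 ^ (m² √m - m)`. -/
lemma error_le {n m : ℕ} (hm : 2 ^ 30 ≤ m) (h1 : m ^ 5 ≤ n) (h2 : n < (m + 1) ^ 5) :
    2 ^ m * (m ^ 2 * (n + 2) ^ (2 * (m ^ 2 * (Nat.log 2 m + 1)))) ≤ (bigSets m n).card := by
  have hs := log_sq_le_sqrt hm
  have hlt : m < 2 ^ (Nat.log 2 m + 1) := Nat.lt_pow_succ_log_self (by norm_num) m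
  set L := Nat.log 2 m + 1 with hL
  have hL1 : 1 ≤ L := by omega
  set s := Nat.sqrt m with hsdef
  have hss : s * s ≤ m := Nat.sqrt_le m
  have hn : n + 2 ≤ 2 ^ (6 * L) := by
    have h3 : (m + 1) ^ 5 ≤ (2 ^ L) ^ 5 := Nat.pow_le_pow_left hlt 5
    have h4 : 2 ^ (6 * L) = (2 ^ L) ^ 5 * 2 ^ L := by
      rw [← pow_succ, ← pow_mul]; ring_nf
    have h5 : 2 ≤ 2 ^ L := by
      calc 2 = 2 ^ 1 := by norm_num
        _ ≤ 2 ^ L := Nat.pow_le_pow_right (by norm_num) hL1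
    have h6 : 1 ≤ (2 ^ L) ^ 5 := Nat.one_le_pow _ _ (by positivity)
    rw [h4]
    nlinarith
  have hLs : L ≤ s := by nlinarith
  have hsm : s ≤ m := by nlinarith
  have hlow := two_pow_le_card_bigSets m n (m ^ 2 * s) (by nlinarith) (by nlinarith)
    (le_trans (by nlinarith [Nat.mul_le_mul_left (m ^ 4) hss]) h1)
  refine le_trans ?_ hlow
  calc 2 ^ m * (m ^ 2 * (n + 2) ^ (2 * (m ^ 2 * L)))
      ≤ 2 ^ m * ((2 ^ L) ^ 2 * (2 ^ (6 * L)) ^ (2 * (m ^ 2 * L))) := by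
        gcongr
    _ = 2 ^ (m + (L * 2 + 6 * L * (2 * (m ^ 2 * L)))) := by
        rw [← pow_mul, ← pow_mul, ← pow_add, ← pow_add]
    _ ≤ 2 ^ (m ^ 2 * s - m) := by
        refine Nat.pow_le_pow_right (by norm_num) ?_
        have h7 : 16 * (m ^ 2 * L ^ 2) ≤ m ^ 2 * s := by
          have := Nat.mul_le_mul_left (m ^ 2) hs
          rwa [mul_left_comm] at this
        have h8 : m ^ 2 * 1 ≤ m ^ 2 * L ^ 2 := Nat.mul_le_mul_left _ (Nat.one_le_pow _ _ hL1)
        have h9 : 4 * m ≤ m ^ 2 := by nlinarith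
        have h10 : 6 * L * (2 * (m ^ 2 * L)) = 12 * (m ^ 2 * L ^ 2) := by ring
        have h11 : L ≤ m := hLs.trans hsm
        rw [h10]
        generalize m ^ 2 * L ^ 2 = A at *
        generalize m ^ 2 * s = B at *
        omega

/-- The proportion by which the count of partitions into distinct parts `> kn n` shrinks when `n`
is lowered by the largest possible sum of parts `≤ kn n`. -/
noncomputable def shrink (n : ℕ) : ℝ :=
  ((bigSets (kn n) (n - ∑ k ∈ Finset.Icc 1 (kn n), k)).card : ℝ) / (bigSets (kn n) n).card

lemma shrink_bounds {n : ℕ} (hm : 2 ^ 30 ≤ kn n) :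
    1 - 2 / ((Nat.log 2 (kn n) : ℝ) + 1) - (1 / 2 : ℝ) ^ (kn n) ≤ shrink n ∧ shrink n ≤ 1 ∧
      (∑ k ∈ Finset.Icc 1 (kn n), k) < n := by
  have h1 := kn_pow_le n
  have h2 := lt_kn_succ_pow n
  unfold shrink
  generalize kn n = m at *
  have herr := error_le hm h1 h2
  have hM := sum_Icc_id_le m
  generalize ∑ k ∈ Finset.Icc 1 m, k = M at *
  have hMn : M < n := by
    have : m ^ 2 < m ^ 5 := Nat.pow_lt_pow_right (by omega) (by norm_num)
    omega
  set L := Nat.log 2 m with hL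
  set K := m ^ 2 * (L + 1) with hK
  have hm0 : 0 < m := by omega
  have hK1 : 1 ≤ K := Nat.mul_pos (by positivity) (by omega)
  have hq : 0 < (bigSets m n).card := lt_of_lt_of_le (by positivity) herr
  have hq' : (0 : ℝ) < (bigSets m n).card := by exact_mod_cast hq
  refine ⟨?_, ?_, hMn⟩
  · have hadd := card_bigSets_add_le m n K hK1 M (n - M) (by omega)
    rw [show n - M + M = n by omega] at hadd
    set R : ℝ := ((n + 2 : ℕ) : ℝ) ^ (2 * K) with hR
    have herr' : (2 : ℝ) ^ m * ((m : ℝ) ^ 2 * R) ≤ (bigSets m n).card := by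
      rw [hR]; exact_mod_cast herr
    have hMm : (M : ℝ) ≤ (m : ℝ) ^ 2 := by exact_mod_cast hM
    have hK' : (0 : ℝ) < K := by exact_mod_cast hK1
    set E : ℝ := (1 + 2 / (K : ℝ)) ^ M with hE
    have hE0 : 0 < E := by positivity
    have hE1 : 1 - 2 / ((L : ℝ) + 1) ≤ E⁻¹ := by
      have e1 : E ≤ Real.exp (2 / ((L : ℝ) + 1)) := by
        calc E ≤ Real.exp (2 / (K : ℝ)) ^ M := by
              refine pow_le_pow_left₀ (by positivity) ?_ M
              linarith [Real.add_one_le_exp (2 / (K : ℝ))]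
          _ = Real.exp (M * (2 / (K : ℝ))) := by rw [Real.exp_nat_mul]
          _ ≤ _ := by
              refine Real.exp_le_exp.2 ?_
              rw [mul_div_assoc', div_le_div_iff₀ hK' (by positivity), hK]
              push_cast
              have : 0 ≤ (L : ℝ) + 1 := by positivity
              nlinarith [mul_le_mul_of_nonneg_right hMm this]
      calc 1 - 2 / ((L : ℝ) + 1) ≤ Real.exp (-(2 / ((L : ℝ) + 1))) := by
            linarith [Real.add_one_le_exp (-(2 / ((L : ℝ) + 1)))]
        _ = (Real.exp (2 / ((L : ℝ) + 1)))⁻¹ := Real.exp_neg _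
        _ ≤ E⁻¹ := inv_anti₀ hE0 e1
    have hR0 : 0 ≤ R := by positivity
    have hMR : M * R ≤ (1 / 2 : ℝ) ^ m * (bigSets m n).card := by
      have e2 : (M : ℝ) * R ≤ (m : ℝ) ^ 2 * R := mul_le_mul_of_nonneg_right hMm hR0
      have e3 : (1 / 2 : ℝ) ^ m * ((2 : ℝ) ^ m * ((m : ℝ) ^ 2 * R)) = (m : ℝ) ^ 2 * R := by
        rw [← mul_assoc, ← mul_pow]; norm_num
      have e4 := mul_le_mul_of_nonneg_left herr' (show (0 : ℝ) ≤ (1 / 2 : ℝ) ^ m by positivity)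
      linarith
    have hadd' : E⁻¹ * (bigSets m n).card ≤ (bigSets m (n - M)).card + M * R := by
      rw [inv_mul_le_iff₀ hE0]; exact hadd
    rw [le_div_iff₀ hq']
    have := mul_le_mul_of_nonneg_right hE1 hq'.le
    nlinarith
  · rw [div_le_one hq']
    exact_mod_cast card_bigSets_mono m (by omega) (by omega)

lemma tendsto_shrink : Tendsto shrink atTop (nhds 1) := by
  have hL : Tendsto (fun n => (Nat.log 2 (kn n) : ℝ) + 1) atTop atTop := by
    have hlog : Tendsto (fun m => Nat.log 2 m) atTop atTop := by
      refine tendsto_atTop.2 fun b => ?_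
      filter_upwards [eventually_ge_atTop (2 ^ b)] with m hm
      exact (Nat.le_log_iff_pow_le (by norm_num)
        (by have := Nat.pos_of_ne_zero (pow_ne_zero b (two_ne_zero (α := ℕ))); omega)).2 hm
    exact tendsto_atTop_add_const_right _ _
      (tendsto_natCast_atTop_atTop.comp (hlog.comp tendsto_kn))
  have hlow : Tendsto (fun n => 1 - 2 / ((Nat.log 2 (kn n) : ℝ) + 1) - (1 / 2 : ℝ) ^ (kn n))
      atTop (nhds 1) := by
    have h1 : Tendsto (fun n => 2 / ((Nat.log 2 (kn n) : ℝ) + 1)) atTop (nhds 0) :=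
      tendsto_const_nhds.div_atTop hL
    have h2 : Tendsto (fun n => (1 / 2 : ℝ) ^ (kn n)) atTop (nhds 0) :=
      (tendsto_pow_atTop_nhds_zero_of_lt_one (by norm_num) (by norm_num)).comp tendsto_kn
    simpa using (tendsto_const_nhds (x := (1 : ℝ)).sub h1).sub h2
  have hev := tendsto_kn.eventually_ge_atTop (2 ^ 30)
  refine tendsto_of_tendsto_of_tendsto_of_le_of_le' hlow tendsto_const_nhds ?_ ?_
  · filter_upwards [hev] with n hn using (shrink_bounds hn).1
  · filter_upwards [hev] with n hn using (shrink_bounds hn).2.1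

/-! ### The limit law -/

/-- The deterministic gap between `∑ 2 X_k / k - log m - γ` and `∑ (2 X_k - 1) / k`. -/
noncomputable def centering (m : ℕ) : ℝ :=
  ∑ k ∈ Finset.Icc 1 m, (1 : ℝ) / k - Real.log m - Real.eulerMascheroniConstant

lemma tendsto_centering : Tendsto centering atTop (nhds 0) := by
  have h := Real.tendsto_harmonic_sub_log.sub_const Real.eulerMascheroniConstant
  rw [sub_self] at h
  refine h.congr fun m => ?_
  simp [centering, harmonic_eq_sum_Icc]

/-- The event of the theorem, in terms of the set `T` of parts `≤ m`. -/
def smallEvent (x : ℝ) (m : ℕ) (T : Finset ℕ) : Prop :=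
  (∑ k ∈ Finset.Icc 1 m, 2 * (if k ∈ T then (1 : ℝ) else 0) / k)
    - Real.log m - Real.eulerMascheroniConstant ≤ x

lemma smallEvent_coin (x : ℝ) (m : ℕ) (ω : ℕ → Bool) :
    smallEvent x m ((Finset.Icc 1 m).filter fun k => ω k = true) ↔
      Hpart ω m + centering m ≤ x := by
  have : (∑ k ∈ Finset.Icc 1 m, 2 *
      (if k ∈ (Finset.Icc 1 m).filter (fun k => ω k = true) then (1 : ℝ) else 0) / k) =
      Hpart ω m + ∑ k ∈ Finset.Icc 1 m, (1 : ℝ) / k := by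
    rw [Hpart, ← Finset.sum_add_distrib]
    refine Finset.sum_congr rfl fun k hk => ?_
    simp only [Finset.mem_filter, hk, true_and]
    split_ifs <;> ring
  rw [smallEvent, this, centering]
  constructor <;> intro h <;> linarith

lemma Pn_congr {n : ℕ} {p q : n.Partition → Prop}
    (h : ∀ lam ∈ Nat.Partition.distincts n, p lam ↔ q lam) : Pn n p = Pn n q := by
  classical
  unfold Pn
  congr 3
  ext lam
  simp only [Finset.mem_filter]
  exact and_congr_right (h lam)

theorem small_parts_distribution
    (μ : Measure (ℕ → Bool)) [IsProbabilityMeasure μ]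
    (hμ : ∀ (s : Finset ℕ) (f : ℕ → Bool),
      μ {ω | ∀ k ∈ s, ω k = f k} = (1 / 2 : ℝ≥0∞) ^ s.card)
    (x : ℝ) :
    Tendsto
      (fun n : ℕ => Pn n (fun lam =>
        (∑ k ∈ Finset.Icc 1 (kn n), 2 * (X lam k : ℝ) / k)
          - Real.log (kn n) - Real.eulerMascheroniConstant ≤ x))
      atTop
      (nhds ((μ {ω | ∃ l : ℝ, Tendsto (fun m => Hpart ω m) atTop (nhds l) ∧ l ≤ x}).toReal)) := by
  classical
  have hp := measurePreserving_flipAt μ hμ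
  have ha : Tendsto (fun n => (μ {ω | Hpart ω (kn n) + centering (kn n) ≤ x}).toReal) atTop
      (nhds ((μ {ω | ∃ l : ℝ, Tendsto (fun m => Hpart ω m) atTop (nhds l) ∧ l ≤ x}).toReal)) :=
    (ENNReal.tendsto_toReal (measure_ne_top _ _)).comp
      ((tendsto_measure_Hpart_le μ hp x centering tendsto_centering).comp tendsto_kn)
  have hbounds : ∀ᶠ n in atTop,
      (μ {ω | Hpart ω (kn n) + centering (kn n) ≤ x}).toReal * shrink n ≤
        Pn n (fun lam => (∑ k ∈ Finset.Icc 1 (kn n), 2 * (X lam k : ℝ) / k)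
          - Real.log (kn n) - Real.eulerMascheroniConstant ≤ x) ∧
      Pn n (fun lam => (∑ k ∈ Finset.Icc 1 (kn n), 2 * (X lam k : ℝ) / k)
          - Real.log (kn n) - Real.eulerMascheroniConstant ≤ x) ≤
        (μ {ω | Hpart ω (kn n) + centering (kn n) ≤ x}).toReal / shrink n := by
    filter_upwards [tendsto_kn.eventually_ge_atTop (2 ^ 30),
      tendsto_shrink.eventually_const_lt (show (0 : ℝ) < 1 by norm_num)] with n hn hpos
    obtain ⟨-, -, hlt⟩ := shrink_bounds hn
    have hcard : 0 < (bigSets (kn n) (n - ∑ k ∈ Finset.Icc 1 (kn n), k)).card := by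
      rcases Nat.eq_zero_or_pos
        (bigSets (kn n) (n - ∑ k ∈ Finset.Icc 1 (kn n), k)).card with h | h
      · simp [shrink, h] at hpos
      · exact h
    have hPn : Pn n (fun lam => (∑ k ∈ Finset.Icc 1 (kn n), 2 * (X lam k : ℝ) / k)
          - Real.log (kn n) - Real.eulerMascheroniConstant ≤ x) =
        Pn n (fun lam => smallEvent x (kn n)
          ((Finset.Icc 1 (kn n)).filter fun k => k ∈ lam.parts)) := by
      refine Pn_congr fun lam hlam => ?_
      have hnd : lam.parts.Nodup := (Finset.mem_filter.1 hlam).2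
      rw [smallEvent, Finset.sum_congr rfl]
      intro k hk
      simp only [Finset.mem_filter, hk, true_and, X, Multiset.count_eq_of_nodup hnd]
      split_ifs <;> simp
    rw [hPn]
    refine Pn_bounds n (kn n) (n - ∑ k ∈ Finset.Icc 1 (kn n), k) (by omega) (by omega) hcard
      (smallEvent x (kn n)) _ _ ?_ rfl
    rw [← measure_eq_card_div μ hμ]
    simp_rw [smallEvent_coin]
  have hlow := ha.mul tendsto_shrink
  have hup := ha.div tendsto_shrink one_ne_zero
  rw [mul_one] at hlow
  rw [div_one] at hup
  exact tendsto_of_tendsto_of_tendsto_of_le_of_le' hlow hup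
    (hbounds.mono fun _ h => h.1) (hbounds.mono fun _ h => h.2)
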